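/- Functions of energy and angular momentum lie in the kernel of the transport operator: If f ∈ H and there exists g : ℝ² → ℝ with f(x,v) = g(E(x,v), L(x,v)) for a.e. (x,v) ∈ S_0, where L(x,v) = |x×v|², then f ∈ D(T) and T f = 0 weakly. -/

import Mathlib

/-!
Fix a test function `ξ`. The pairing of `f` with `Tξ` is the integral over `S0` of `H(E, L) · Tξ`
with `H(E, L) = g(E, L) / |φ'(E)|`, so the claim is that the pushforward of the signed measure
`Tξ dz` under `(E, L)` is zero. A finite signed measure on the plane vanishes as soon as its Fourier
transform does, so it is enough to test with the functions `cos (a E + b L)` and `sin (a E + b L)`.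
These are of class `C¹`. They are conserved, since `TE = 0` (`transport_energy`) and `TL = 0`
(`transport_Lmom`, using that the gradient of the radial potential is parallel to `x`). Since the
field `(v, -∇U0)` is divergence free, integration by parts gives the vanishing
(`integral_comp_mul_transport_eq_zero`). Thus the flow of the characteristic system is never used.

Passing from the Fourier transform to `H` (`integral_comp_mul_eq_zero`) requires `H` to be Borel,
while `g` is an arbitrary function. Since `f` is measurable and equals `g(E, L)` almost everywhere,
`exists_measurable_factor` replaces `g` by a Borel function.
-/

open MeasureTheory Real Set Filter

noncomputable section

abbrev V3 : Type := Fin 3 → ℝ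

def dot3 (x v : V3) : ℝ := ∑ i, x i * v i

def Lmom (z : V3 × V3) : ℝ := dot3 z.1 z.1 * dot3 z.2 z.2 - dot3 z.1 z.2 ^ 2

def energy (U0 : V3 → ℝ) (z : V3 × V3) : ℝ := dot3 z.2 z.2 / 2 + U0 z.1

def gradV (g : V3 → ℝ) (x : V3) : V3 := fun i => fderiv ℝ g x (Pi.single i 1)

def transport (U0 : V3 → ℝ) (f : V3 × V3 → ℝ) (z : V3 × V3) : ℝ :=
  fderiv ℝ f z (z.2, -gradV U0 z.1)

def S0 (U0 : V3 → ℝ) (E0 : ℝ) : Set (V3 × V3) := {z | energy U0 z < E0}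

def SO3 : Set (Matrix (Fin 3) (Fin 3) ℝ) := {A | A * A.transpose = 1 ∧ A.det = 1}

def rot (A : Matrix (Fin 3) (Fin 3) ℝ) (z : V3 × V3) : V3 × V3 := (A.mulVec z.1, A.mulVec z.2)

def SphSymAE (U0 : V3 → ℝ) (E0 : ℝ) (f : V3 × V3 → ℝ) : Prop :=
  ∀ A ∈ SO3, ∀ᵐ z ∂(volume.restrict (S0 U0 E0)), f (rot A z) = f z

def memH (φd : ℝ → ℝ) (U0 : V3 → ℝ) (E0 : ℝ) (f : V3 × V3 → ℝ) : Prop :=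
  AEStronglyMeasurable f (volume.restrict (S0 U0 E0)) ∧ SphSymAE U0 E0 f ∧
    IntegrableOn (fun z => f z ^ 2 / |φd (energy U0 z)|) (S0 U0 E0)

def innerH (φd : ℝ → ℝ) (U0 : V3 → ℝ) (E0 : ℝ) (f g : V3 × V3 → ℝ) : ℝ :=
  ∫ z in S0 U0 E0, f z * g z / |φd (energy U0 z)|

def IsSmoothTest (U0 : V3 → ℝ) (E0 : ℝ) (ξ : V3 × V3 → ℝ) : Prop :=
  ContDiff ℝ (⊤ : ℕ∞) ξ ∧ HasCompactSupport ξ ∧ tsupport ξ ⊆ S0 U0 E0 ∧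
    ∀ A ∈ SO3, ∀ z, ξ (rot A z) = ξ z

def weakT (φd : ℝ → ℝ) (U0 : V3 → ℝ) (E0 : ℝ) (f μ : V3 × V3 → ℝ) : Prop :=
  ∀ ξ, IsSmoothTest U0 E0 ξ →
    ∫ z in S0 U0 E0, f z * transport U0 ξ z / |φd (energy U0 z)| =
      -∫ z in S0 U0 E0, μ z * ξ z / |φd (energy U0 z)|

def memD (φd : ℝ → ℝ) (U0 : V3 → ℝ) (E0 : ℝ) (f : V3 × V3 → ℝ) : Prop :=
  memH φd U0 E0 f ∧ ∃ μ, memH φd U0 E0 μ ∧ weakT φd U0 E0 f μ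

structure NewtonianSteadyState (φ φd : ℝ → ℝ) (U0 : V3 → ℝ) (E0 : ℝ) : Prop where
  E0_neg : E0 < 0
  φ_nonneg : ∀ e, 0 ≤ φ e
  φ_deriv : ∀ e < E0, HasDerivAt φ (φd e) e
  φd_cont : ContinuousOn φd (Iio E0)
  φd_neg : ∀ e < E0, φd e < 0
  φ_vanish : ∀ e, E0 ≤ e → φ e = 0
  U0_smooth : ContDiff ℝ 2 U0
  U0_symm : ∀ A ∈ SO3, ∀ x : V3, U0 (A.mulVec x) = U0 x
  U0_decay : Tendsto U0 (cocompact V3) (nhds 0)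
  poisson : ∀ x : V3, ∑ i, fderiv ℝ (fun y => gradV U0 y i) x (Pi.single i (1 : ℝ)) =
      4 * Real.pi * ∫ v : V3, φ (energy U0 (x, v))
  S0_bounded : Bornology.IsBounded (S0 U0 E0)

/-- U₀ as a radial function. -/
def U0rad (U0 : V3 → ℝ) (r : ℝ) : ℝ := U0 (Pi.single 0 r)

/-- Particle energy in the coordinates (r,w,L). -/
def energyR (U0 : V3 → ℝ) (p : ℝ × ℝ × ℝ) : ℝ :=
  p.2.1 ^ 2 / 2 + p.2.2 / (2 * p.1 ^ 2) + U0rad U0 p.1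

/-- The set S₀ in the coordinates (r,w,L). -/
def S0r (U0 : V3 → ℝ) (E0 : ℝ) : Set (ℝ × ℝ × ℝ) :=
  {p | 0 < p.1 ∧ 0 < p.2.2 ∧ energyR U0 p < E0}

/-- The coordinates (r,w,L) = (|x|, x·v/|x|, |x×v|²) of a point (x,v). -/
def coordR (z : V3 × V3) : ℝ × ℝ × ℝ :=
  (Real.sqrt (dot3 z.1 z.1), dot3 z.1 z.2 / Real.sqrt (dot3 z.1 z.1), Lmom z)

/-- The effective potential ψ_L(r) = U₀(r) + L/(2r²). -/
def psiEff (U0 : V3 → ℝ) (L r : ℝ) : ℝ := U0rad U0 r + L / (2 * r ^ 2)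

/-- The derivative ψ_L'(r). -/
def psiEffD (U0 : V3 → ℝ) (L r : ℝ) : ℝ := deriv (U0rad U0) r - L / r ^ 3

/-- rL L is the unique minimizer of the effective potential ψ_L on (0,∞),
    with negative minimum value. -/
def IsEffMinimizer (U0 : V3 → ℝ) (rL : ℝ → ℝ) : Prop :=
  ∀ L > 0, 0 < rL L ∧ IsMinOn (psiEff U0 L) (Ioi 0) (rL L) ∧ psiEff U0 L (rL L) < 0 ∧
    ∀ r ∈ Ioi (0:ℝ), IsMinOn (psiEff U0 L) (Ioi 0) r → r = rL L

/-- rm E L < rp E L are the turning points, i.e. the radii solving ψ_L(r) = E. -/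
def AreTurningPoints (U0 : V3 → ℝ) (E0 : ℝ) (rL : ℝ → ℝ) (rm rp : ℝ → ℝ → ℝ) : Prop :=
  ∀ L > 0, ∀ E, psiEff U0 L (rL L) < E → E < E0 →
    0 < rm E L ∧ rm E L < rL L ∧ rL L < rp E L ∧
      psiEff U0 L (rm E L) = E ∧ psiEff U0 L (rp E L) = E ∧
      ∀ r > 0, psiEff U0 L r = E → r = rm E L ∨ r = rp E L

/-- RW t r w L is the solution of the radial characteristic system
    ṙ = w, ẇ = -ψ_L'(r) with initial data (r,w). -/
def IsRadialFlow (U0 : V3 → ℝ) (RW : ℝ → ℝ → ℝ → ℝ → ℝ × ℝ) : Prop :=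
  ∀ r w L : ℝ, RW 0 r w L = (r, w) ∧
    ∀ t : ℝ, HasDerivAt (fun s => RW s r w L)
      ((RW t r w L).2, -psiEffD U0 L (RW t r w L).1) t

/-- The radial period T(E,L). -/
def Tper (U0 : V3 → ℝ) (rm rp : ℝ → ℝ → ℝ) (E L : ℝ) : ℝ :=
  2 * ∫ r in rm E L..rp E L, 1 / Real.sqrt (2 * E - 2 * psiEff U0 L r)

/-- The projection (P f)(E,L), computed from the representative fr of f in
    the coordinates (r,w,L). -/
def Pcoef (U0 : V3 → ℝ) (rm rp : ℝ → ℝ → ℝ) (RW : ℝ → ℝ → ℝ → ℝ → ℝ × ℝ)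
    (fr : ℝ × ℝ × ℝ → ℝ) (E L : ℝ) : ℝ :=
  ∫ t in (0:ℝ)..1,
    fr ((RW (t * Tper U0 rm rp E L) (rm E L) 0 L).1,
        (RW (t * Tper U0 rm rp E L) (rm E L) 0 L).2, L)

/-! ### Measures pushed forward to the plane -/

/-- If a measurable function agrees almost everywhere with a function of `p`, then that function of
`p` can be taken Borel, although `g` itself is arbitrary. Off a Borel null set, `g ∘ p` is
measurable; by Lusin's separation theorem for analytic sets it is then measurable for the
σ-algebra generated by `p`, and the Doob-Dynkin lemma yields the Borel factor. -/
theorem exists_measurable_factor {X Y : Type*} [MeasurableSpace X] [StandardBorelSpace X]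
    [MeasurableSpace Y] [StandardBorelSpace Y] {μ : Measure X} {p : X → Y}
    (hp : Measurable p)
    {f : X → ℝ} (hf : AEMeasurable f μ) {g : Y → ℝ} (hg : ∀ᵐ z ∂μ, f z = g (p z)) :
    ∃ h : Y → ℝ, Measurable h ∧ ∀ᵐ z ∂μ, f z = h (p z) := by
  have h1 : ∀ᵐ z ∂μ, f z = g (p z) ∧ f z = hf.mk f z := hg.and hf.ae_eq_mk
  obtain ⟨s, hs, hsm, hs0⟩ := exists_measurable_superset_of_null (mem_ae_iff.1 h1)
  have hgood : ∀ z ∈ sᶜ, f z = g (p z) ∧ f z = hf.mk f z := by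
    intro z hz
    by_contra hcon
    exact hz (hs hcon)
  have : StandardBorelSpace (sᶜ : Set X) := hsm.compl.standardBorel
  let q : (sᶜ : Set X) → Y := fun z => p z
  have hq : Measurable q := hp.comp measurable_subtype_coe
  have hgq : Measurable (g ∘ q) := by
    have : g ∘ q = fun z : (sᶜ : Set X) => hf.mk f z := by
      ext z
      have := hgood z z.2
      simp [q, ← this.1, ← this.2]
    rw [this]
    exact hf.measurable_mk.comp measurable_subtype_coe
  have : MeasurableSpace.CountablySeparated (range q) := inferInstance
  have hr := (hq.measurable_comp_iff_restrict).1 hgq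
  have hc : Measurable[MeasurableSpace.comap q inferInstance] (g ∘ q) := by
    intro t ht
    obtain ⟨u, hu, hu'⟩ := hr ht
    refine ⟨u, hu, ?_⟩
    ext z
    have : (⟨q z, mem_range_self z⟩ : range q) ∈ Subtype.val ⁻¹' u ↔
      (⟨q z, mem_range_self z⟩ : range q) ∈ domRestrict (range q) g ⁻¹' t := by rw [hu']
    simpa using this
  obtain ⟨h, hm, hh⟩ := hc.exists_eq_measurable_comp
  refine ⟨h, hm, ?_⟩
  have hsae : ∀ᵐ z ∂μ, z ∈ sᶜ := by
    rw [ae_iff]; simpa using hs0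
  filter_upwards [hsae] with z hz
  rw [(hgood z hz).1]
  exact congrFun hh ⟨z, hz⟩

/-- If the signed measure `w μ`, pushed forward along `p` to the plane, has vanishing Fourier
transform, then it annihilates every Borel function `H`. The positive and negative parts of `w`
push forward to finite measures with equal characteristic functions, hence to equal measures.
No integrability of `H ∘ p * w` is assumed: without it the Bochner integral is `0` by convention. -/
theorem integral_comp_mul_eq_zero {X : Type*} [MeasurableSpace X] {μ : Measure X} {w : X → ℝ}
    (hwm : Measurable w) (hw : Integrable w μ) {p : X → ℝ × ℝ} (hp : Measurable p)
    (hchar : ∀ L : StrongDual ℝ (ℝ × ℝ), ∫ z, (w z : ℂ) * Complex.exp (L (p z) * Complex.I) ∂μ = 0)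
    {H : ℝ × ℝ → ℝ} (hH : Measurable H) : ∫ z, H (p z) * w z ∂μ = 0 := by
  by_cases hint : Integrable (fun z => H (p z) * w z) μ
  swap
  · exact integral_undef hint
  let wp : X → NNReal := fun z => (w z).toNNReal
  let wn : X → NNReal := fun z => (-w z).toNNReal
  have hwp : Measurable wp := hwm.real_toNNReal
  have hwn : Measurable wn := hwm.neg.real_toNNReal
  have hdiff : ∀ z, (wp z : ℝ) - wn z = w z := fun z => by
    simp only [wp, wn, Real.coe_toNNReal']
    exact max_zero_sub_eq_self (w z)
  have hlp : ∀ z, ‖(wp z : ℝ)‖ ≤ ‖w z‖ := fun z => by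
    simp only [wp, Real.coe_toNNReal', Real.norm_eq_abs]
    rw [abs_of_nonneg (le_max_right _ _)]
    exact max_le (le_abs_self _) (abs_nonneg _)
  have hln : ∀ z, ‖(wn z : ℝ)‖ ≤ ‖w z‖ := fun z => by
    simp only [wn, Real.coe_toNNReal', Real.norm_eq_abs]
    rw [abs_of_nonneg (le_max_right _ _)]
    exact max_le (neg_le_abs _) (abs_nonneg _)
  have hfin : ∀ u : X → NNReal, Measurable u → (∀ z, ‖(u z : ℝ)‖ ≤ ‖w z‖) →
      IsFiniteMeasure (μ.withDensity fun z => (u z : ENNReal)) := by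
    intro u hu hle
    have : Integrable (fun z => (u z : ℝ)) μ :=
      hw.mono hu.coe_nnreal_real.aestronglyMeasurable (Eventually.of_forall hle)
    refine isFiniteMeasure_withDensity ?_
    have h2 := this.2.ne
    simpa [enorm_eq_nnnorm] using h2
  have := hfin wp hwp hlp
  have := hfin wn hwn hln
  have heq : (μ.withDensity fun z => (wp z : ENNReal)).map p
      = (μ.withDensity fun z => (wn z : ENNReal)).map p := by
    apply Measure.ext_of_charFunDual
    ext L
    have hbd : ∀ z, ‖Complex.exp (L (p z) * Complex.I)‖ = 1 := fun z =>
      Complex.norm_exp_ofReal_mul_I _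
    have hem : Measurable fun z => Complex.exp (L (p z) * Complex.I) := by
      have : Measurable fun z => L (p z) := L.continuous.measurable.comp hp
      fun_prop
    have key : ∀ u : X → NNReal, Measurable u → (∀ z, ‖(u z : ℝ)‖ ≤ ‖w z‖) →
        Integrable (fun z => u z • Complex.exp (L (p z) * Complex.I)) μ := by
      intro u hu hle
      refine hw.mono (hu.smul hem).aestronglyMeasurable (Eventually.of_forall fun z => ?_)
      rw [NNReal.smul_def, norm_smul, hbd, mul_one]
      exact hle z
    rw [charFunDual_apply, charFunDual_apply, integral_map hp.aemeasurable
      (by fun_prop), integral_map hp.aemeasurable (by fun_prop),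
      integral_withDensity_eq_integral_smul hwp, integral_withDensity_eq_integral_smul hwn,
      ← sub_eq_zero, ← integral_sub (key wp hwp hlp) (key wn hwn hln), ← hchar L]
    refine integral_congr_ae (Eventually.of_forall fun z => ?_)
    simp only [NNReal.smul_def, Complex.real_smul]
    rw [← sub_mul, ← hdiff z]
    push_cast
    ring
  have hpair : ∀ u : X → NNReal, Measurable u →
      ∫ y, H y ∂((μ.withDensity fun z => (u z : ENNReal)).map p)
        = ∫ z, H (p z) * (u z : ℝ) ∂μ := by
    intro u hu
    rw [integral_map hp.aemeasurable hH.aestronglyMeasurable,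
      integral_withDensity_eq_integral_smul hu]
    refine integral_congr_ae (Eventually.of_forall fun z => ?_)
    simp only [NNReal.smul_def, smul_eq_mul, mul_comm]
  have hi : ∀ u : X → NNReal, Measurable u → (∀ z, ‖(u z : ℝ)‖ ≤ ‖w z‖) →
      Integrable (fun z => H (p z) * (u z : ℝ)) μ := by
    intro u hu hle
    refine hint.mono ((hH.comp hp).mul hu.coe_nnreal_real).aestronglyMeasurable
      (Eventually.of_forall fun z => ?_)
    rw [norm_mul, norm_mul]
    exact mul_le_mul_of_nonneg_left (hle z) (norm_nonneg _)
  calc ∫ z, H (p z) * w z ∂μ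
      = ∫ z, (H (p z) * (wp z : ℝ) - H (p z) * (wn z : ℝ)) ∂μ := by
        refine integral_congr_ae (Eventually.of_forall fun z => ?_)
        simp only [← hdiff z]; ring
    _ = 0 := by
        rw [integral_sub (hi wp hwp hlp) (hi wn hwn hln), ← hpair wp hwp, ← hpair wn hwn, heq,
          sub_self]

section Conservation

open ContinuousLinearMap

/-! ### Conservation of energy and angular momentum -/

/-- The rotation by the angle `t` in the coordinate plane of the axes `i` and `j`. -/
theorem SO3_rotation (i j : Fin 3) (hij : i ≠ j) (t : ℝ) :
    ∃ A ∈ SO3, ∀ x : V3, A.mulVec x = fun k =>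
      if k = i then Real.cos t * x i - Real.sin t * x j
      else if k = j then Real.sin t * x i + Real.cos t * x j else x k := by
  refine ⟨Matrix.of fun k l => if k = i then (if l = i then Real.cos t else if l = j then -Real.sin t else 0)
      else if k = j then (if l = i then Real.sin t else if l = j then Real.cos t else 0)
      else if k = l then 1 else 0, ?_, ?_⟩
  · constructor
    · ext k l
      fin_cases i <;> fin_cases j <;> first | exact absurd rfl hij | skip
      all_goals fin_cases k <;> fin_cases l <;>
        simp [Matrix.mul_apply, Fin.sum_univ_three] <;>
        nlinarith [Real.sin_sq_add_cos_sq t]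
    · fin_cases i <;> fin_cases j <;> first | exact absurd rfl hij | skip
      all_goals simp [Matrix.det_fin_three]; nlinarith [Real.sin_sq_add_cos_sq t]
  · intro x
    ext k
    fin_cases i <;> fin_cases j <;> first | exact absurd rfl hij | skip
    all_goals fin_cases k <;> simp [Matrix.mulVec, dotProduct, Fin.sum_univ_three] <;> ring

theorem fderiv_apply_eq_sum (U : V3 → ℝ) (x v : V3) :
    fderiv ℝ U x v = ∑ i, v i * gradV U x i := by
  have : v = ∑ i, v i • (Pi.single i (1 : ℝ) : V3) := by
    ext k; simp [Finset.sum_apply, Pi.single_apply]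
  conv_lhs => rw [this]
  simp [gradV]

/-- The gradient of a spherically symmetric function is parallel to `x`: differentiate
`t ↦ U (R_t x)`, which is constant, at `t = 0` for the rotations `R_t` in the coordinate planes. -/
theorem gradV_parallel {U : V3 → ℝ} (hU : Differentiable ℝ U)
    (hsym : ∀ A ∈ SO3, ∀ x : V3, U (A.mulVec x) = U x) (x : V3) (i j : Fin 3) :
    x i * gradV U x j = x j * gradV U x i := by
  rcases eq_or_ne i j with rfl | hij
  · rfl
  let c : ℝ → V3 := fun t k => if k = i then Real.cos t * x i - Real.sin t * x j
      else if k = j then Real.sin t * x i + Real.cos t * x j else x k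
  have hc0 : c 0 = x := by
    ext k; by_cases h : k = i
    · simp [c, h]
    · by_cases h' : k = j
      · simp [c, h', hij.symm]
      · simp [c, h, h']
  have hc : HasDerivAt c (fun k => if k = i then -x j else if k = j then x i else 0) 0 := by
    rw [hasDerivAt_pi]
    intro k
    by_cases h : k = i
    · simp only [c, h, if_true]
      refine (((Real.hasDerivAt_cos 0).mul_const (x i)).sub
        ((Real.hasDerivAt_sin 0).mul_const (x j))).congr_deriv ?_
      simp
    · by_cases h' : k = j
      · simp only [c, h', hij.symm, if_true, if_false]
        refine (((Real.hasDerivAt_sin 0).mul_const (x i)).add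
          ((Real.hasDerivAt_cos 0).mul_const (x j))).congr_deriv ?_
        simp
      · simp only [c, h, h', if_false]
        exact hasDerivAt_const _ _
  have hconst : ∀ t, U (c t) = U x := by
    intro t
    obtain ⟨A, hA, hAx⟩ := SO3_rotation i j hij t
    rw [← hsym A hA x, hAx]
  have h1 : HasDerivAt (fun t => U (c t)) (fderiv ℝ U (c 0) _) 0 :=
    (hU (c 0)).hasFDerivAt.comp_hasDerivAt (0 : ℝ) hc
  have h2 : HasDerivAt (fun t => U (c t)) 0 0 := by
    simp only [hconst]; exact hasDerivAt_const _ _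
  have h3 := h1.unique h2
  rw [hc0, fderiv_apply_eq_sum] at h3
  fin_cases i <;> fin_cases j <;> first | exact absurd rfl hij | skip
  all_goals simp [Fin.sum_univ_three] at h3 ⊢ ; linarith

/-- Conservation of energy along the characteristics. -/
theorem transport_energy {U : V3 → ℝ} (hU : Differentiable ℝ U) (z : V3 × V3) :
    DifferentiableAt ℝ (energy U) z ∧ transport U (energy U) z = 0 := by
  have hk : HasFDerivAt (fun z : V3 × V3 => U z.1) ((fderiv ℝ U z.1).comp (fst ℝ V3 V3)) z :=
    (hU z.1).hasFDerivAt.comp z hasFDerivAt_fst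
  have hc : ∀ i : Fin 3, HasFDerivAt (fun z : V3 × V3 => z.2 i)
      ((proj i : V3 →L[ℝ] ℝ).comp (snd ℝ V3 V3)) z :=
    fun i => ((proj i : V3 →L[ℝ] ℝ).comp (snd ℝ V3 V3)).hasFDerivAt
  have hE := by
    have := (((((hc 0).mul (hc 0)).add ((hc 1).mul (hc 1))).add
      ((hc 2).mul (hc 2))).const_mul (1/2)).add hk
    refine this.congr_of_eventuallyEq (f₁ := energy U) (Eventually.of_forall fun y => ?_)
    simp [energy, dot3, Fin.sum_univ_three]; ring
  refine ⟨hE.differentiableAt, ?_⟩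
  rw [transport, hE.fderiv]
  simp [fderiv_apply_eq_sum, Fin.sum_univ_three]
  ring

/-- Conservation of angular momentum along the characteristics, from the Lagrange identity
`L = ∑_{i<j} (x_i v_j - x_j v_i)²` and the fact that the force is central. -/
theorem transport_Lmom {U : V3 → ℝ} (hU : Differentiable ℝ U)
    (hsym : ∀ A ∈ SO3, ∀ x : V3, U (A.mulVec x) = U x) (z : V3 × V3) :
    DifferentiableAt ℝ Lmom z ∧ transport U Lmom z = 0 := by
  have hv : ∀ i : Fin 3, HasFDerivAt (fun z : V3 × V3 => z.2 i)
      ((proj i : V3 →L[ℝ] ℝ).comp (snd ℝ V3 V3)) z :=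
    fun i => ((proj i : V3 →L[ℝ] ℝ).comp (snd ℝ V3 V3)).hasFDerivAt
  have hx : ∀ i : Fin 3, HasFDerivAt (fun z : V3 × V3 => z.1 i)
      ((proj i : V3 →L[ℝ] ℝ).comp (fst ℝ V3 V3)) z :=
    fun i => ((proj i : V3 →L[ℝ] ℝ).comp (fst ℝ V3 V3)).hasFDerivAt
  have hm := fun i j : Fin 3 => ((hx i).mul (hv j)).sub ((hx j).mul (hv i))
  have hL := by
    have := (((hm 0 1).mul (hm 0 1)).add ((hm 0 2).mul (hm 0 2))).add ((hm 1 2).mul (hm 1 2))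
    refine this.congr_of_eventuallyEq (f₁ := Lmom) (Eventually.of_forall fun y => ?_)
    simp [Lmom, dot3, Fin.sum_univ_three]; ring
  refine ⟨hL.differentiableAt, ?_⟩
  rw [transport, hL.fderiv]
  have h01 := gradV_parallel hU hsym z.1 0 1
  have h02 := gradV_parallel hU hsym z.1 0 2
  have h12 := gradV_parallel hU hsym z.1 1 2
  simp
  linear_combination (-2 * (z.1 0 * z.2 1 - z.1 1 * z.2 0)) * h01
    + (-2 * (z.1 0 * z.2 2 - z.1 2 * z.2 0)) * h02
    + (-2 * (z.1 1 * z.2 2 - z.1 2 * z.2 1)) * h12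

/-! ### Integration by parts for the transport operator -/

/-- Integration by parts in a direction `e` along which the coefficient `c` is constant. -/
theorem integral_mul_fderiv_eq_zero {c η : V3 × V3 → ℝ} {e : V3 × V3}
    (hc : ContDiff ℝ 1 c) (hce : ∀ z, fderiv ℝ c z e = 0) (hη : ContDiff ℝ 1 η)
    (hs : HasCompactSupport η) :
    Integrable (fun z => c z * fderiv ℝ η z e) ∧ ∫ z, c z * fderiv ℝ η z e = 0 := by
  have hcont : Continuous fun z => fderiv ℝ η z e :=
    (hη.continuous_fderiv one_ne_zero).clm_apply continuous_const
  have hI : Integrable (fun z => c z * fderiv ℝ η z e) :=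
    (hc.continuous.mul hcont).integrable_of_hasCompactSupport
      ((hs.fderiv_apply (𝕜 := ℝ) e).mul_left)
  refine ⟨hI, ?_⟩
  have : (volume : Measure (V3 × V3)).IsAddHaarMeasure := Measure.prod.instIsAddHaarMeasure _ _
  rw [integral_mul_fderiv_eq_neg_fderiv_mul_of_integrable _ hI
    ((hc.continuous.mul hη.continuous).integrable_of_hasCompactSupport hs.mul_left)
    (fun z _ => (hc.differentiable one_ne_zero) z) (fun z _ => (hη.differentiable one_ne_zero) z)]
  · simp [hce]
  · simp [hce]

theorem contDiff_gradV {U : V3 → ℝ} (hU : ContDiff ℝ 2 U) (i : Fin 3) :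
    ContDiff ℝ 1 fun z : V3 × V3 => gradV U z.1 i := by
  have h : ContDiff ℝ 1 (fderiv ℝ U) := hU.fderiv_right (by norm_num [one_add_one_eq_two])
  exact (h.comp contDiff_fst).clm_apply contDiff_const

theorem transport_eq_sum (U : V3 → ℝ) (η : V3 × V3 → ℝ) (z : V3 × V3) :
    transport U η z = ∑ i, (z.2 i * fderiv ℝ η z (Pi.single i (1 : ℝ), 0)
      - gradV U z.1 i * fderiv ℝ η z (0, Pi.single i (1 : ℝ))) := by
  have : ((z.2, -gradV U z.1) : V3 × V3) = ∑ i, (z.2 i • ((Pi.single i (1 : ℝ), 0) : V3 × V3)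
      - gradV U z.1 i • ((0, Pi.single i (1 : ℝ)) : V3 × V3)) := by
    ext k
    · simp [Prod.fst_sum, Finset.sum_apply, Pi.single_apply]
    · simp [Prod.snd_sum, Finset.sum_apply, Pi.single_apply]
  rw [transport, this]
  simp only [map_sum, map_sub, map_smul, smul_eq_mul]

/-- The Hamiltonian vector field `(v, -∇U)` is divergence free: its `x`-components do not depend
on `x` and its `v`-components do not depend on `v`. -/
theorem integral_transport_eq_zero {U : V3 → ℝ} (hU : ContDiff ℝ 2 U) {η : V3 × V3 → ℝ}
    (hη : ContDiff ℝ 1 η) (hs : HasCompactSupport η) : ∫ z, transport U η z = 0 := by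
  have hx : ∀ i : Fin 3, _ := fun i : Fin 3 => integral_mul_fderiv_eq_zero
    (c := fun z : V3 × V3 => z.2 i) (e := (Pi.single i (1 : ℝ), 0))
    (((proj i : V3 →L[ℝ] ℝ).comp (snd ℝ V3 V3)).contDiff)
    (fun z => by
      have : HasFDerivAt (fun z : V3 × V3 => z.2 i)
        ((proj i : V3 →L[ℝ] ℝ).comp (snd ℝ V3 V3)) z :=
        ((proj i : V3 →L[ℝ] ℝ).comp (snd ℝ V3 V3)).hasFDerivAt
      rw [this.fderiv]; simp) hη hs
  have hv : ∀ i : Fin 3, _ := fun i : Fin 3 => integral_mul_fderiv_eq_zero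
    (c := fun z : V3 × V3 => gradV U z.1 i) (e := (0, Pi.single i (1 : ℝ)))
    (contDiff_gradV hU i)
    (fun z => by
      have hg : DifferentiableAt ℝ (fun x : V3 => gradV U x i) z.1 :=
        (((contDiff_gradV hU i).comp (contDiff_id.prodMk contDiff_const :
          ContDiff ℝ 1 fun x : V3 => (x, (0 : V3)))).differentiable one_ne_zero) z.1
      have : HasFDerivAt (fun z : V3 × V3 => gradV U z.1 i)
        ((fderiv ℝ (fun x : V3 => gradV U x i) z.1).comp (fst ℝ V3 V3)) z :=
        hg.hasFDerivAt.comp z hasFDerivAt_fst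
      rw [this.fderiv]; simp) hη hs
  simp only [transport_eq_sum]
  rw [integral_finsetSum (f := fun i z => z.2 i * fderiv ℝ η z (Pi.single i (1 : ℝ), 0)
      - gradV U z.1 i * fderiv ℝ η z (0, Pi.single i (1 : ℝ))) _
      fun i _ => (hx i).1.sub (hv i).1]
  refine Finset.sum_eq_zero fun i _ => ?_
  rw [integral_sub (hx i).1 (hv i).1, (hx i).2, (hv i).2, sub_zero]

theorem contDiff_energy {U : V3 → ℝ} (hU : ContDiff ℝ 2 U) : ContDiff ℝ 2 (energy U) := by
  unfold energy dot3
  exact (ContDiff.div_const (by fun_prop) 2).add (hU.comp contDiff_fst)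

theorem contDiff_Lmom : ContDiff ℝ 2 Lmom := by
  unfold Lmom dot3
  fun_prop

/-- The transport of a test function is orthogonal to every `C¹` function `k` of
`a E + b L`: as `k` is conserved, `k · Tξ = T(k ξ)`, which has integral zero. -/
theorem integral_comp_mul_transport_eq_zero {U : V3 → ℝ} (hU : ContDiff ℝ 2 U)
    (hsym : ∀ A ∈ SO3, ∀ x : V3, U (A.mulVec x) = U x) {θ : ℝ → ℝ} (hθ : ContDiff ℝ 1 θ)
    (a b : ℝ) {ξ : V3 × V3 → ℝ} (hξ : ContDiff ℝ 1 ξ) (hs : HasCompactSupport ξ) :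
    ∫ z, transport U ξ z * θ (a * energy U z + b * Lmom z) = 0 := by
  have hk : ContDiff ℝ 1 fun z => θ (a * energy U z + b * Lmom z) :=
    hθ.comp ((contDiff_const.mul ((contDiff_energy hU).of_le one_le_two)).add
      (contDiff_const.mul (contDiff_Lmom.of_le one_le_two)))
  rw [← integral_transport_eq_zero hU (hξ.mul hk) hs.mul_right]
  refine integral_congr_ae (Eventually.of_forall fun z => ?_)
  obtain ⟨dE, tE⟩ := transport_energy (hU.differentiable two_ne_zero) z
  obtain ⟨dL, tL⟩ := transport_Lmom (hU.differentiable two_ne_zero) hsym z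
  have h1 := ((hθ.differentiable one_ne_zero) (a * energy U z + b * Lmom z)).hasDerivAt
    |>.comp_hasFDerivAt z ((dE.hasFDerivAt.const_mul a).add (dL.hasFDerivAt.const_mul b))
  have h2 := ((hξ.differentiable one_ne_zero) z).hasFDerivAt.mul h1
  have h3 : HasFDerivAt (fun z => ξ z * θ (a * energy U z + b * Lmom z)) _ z := h2
  unfold transport at tE tL ⊢
  dsimp only
  rw [h3.fderiv]
  simp [tE, tL]
  ring

/-- The Fourier transform of the pushforward of `Tξ dz` under `(E, L)` vanishes. -/
theorem integral_transport_mul_exp_eq_zero {U : V3 → ℝ} (hU : ContDiff ℝ 2 U)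
    (hsym : ∀ A ∈ SO3, ∀ x : V3, U (A.mulVec x) = U x)
    {ξ : V3 × V3 → ℝ} (hξ : ContDiff ℝ 1 ξ) (hs : HasCompactSupport ξ)
    (hw : Integrable (transport U ξ)) (L : StrongDual ℝ (ℝ × ℝ)) :
    ∫ z, (transport U ξ z : ℂ) * Complex.exp (L (energy U z, Lmom z) * Complex.I) = 0 := by
  have hL : ∀ z, L (energy U z, Lmom z) = L (1, 0) * energy U z + L (0, 1) * Lmom z := by
    intro z
    have : ((energy U z, Lmom z) : ℝ × ℝ)
        = energy U z • ((1, 0) : ℝ × ℝ) + Lmom z • ((0, 1) : ℝ × ℝ) := by simp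
    rw [this, map_add, map_smul, map_smul]
    simp only [smul_eq_mul]
    ring
  have hcosin : ∀ θ : ℝ → ℝ, Continuous θ → (∀ t, |θ t| ≤ 1) →
      Integrable fun z => transport U ξ z * θ (L (energy U z, Lmom z)) := by
    intro θ hθ hb
    have hm : Continuous fun z => θ (L (energy U z, Lmom z)) :=
      hθ.comp (L.continuous.comp ((contDiff_energy hU).continuous.prodMk contDiff_Lmom.continuous))
    exact hw.mul_bdd (c := 1) hm.aestronglyMeasurable (Eventually.of_forall fun z => hb _)
  have hc := integral_comp_mul_transport_eq_zero hU hsym Real.contDiff_cos (L (1, 0)) (L (0, 1))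
    hξ hs
  have hsn := integral_comp_mul_transport_eq_zero hU hsym Real.contDiff_sin (L (1, 0)) (L (0, 1))
    hξ hs
  simp only [← hL] at hc hsn
  have hic := (hcosin _ Real.continuous_cos Real.abs_cos_le_one)
  have his := (hcosin _ Real.continuous_sin Real.abs_sin_le_one)
  calc ∫ z, (transport U ξ z : ℂ) * Complex.exp (L (energy U z, Lmom z) * Complex.I)
      = ∫ z, (((transport U ξ z * Real.cos (L (energy U z, Lmom z)) : ℝ) : ℂ)
          + ((transport U ξ z * Real.sin (L (energy U z, Lmom z)) : ℝ) : ℂ) * Complex.I) := by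
        refine integral_congr_ae (Eventually.of_forall fun z => ?_)
        simp only [Complex.exp_mul_I, Complex.ofReal_mul, Complex.ofReal_cos, Complex.ofReal_sin]
        ring
    _ = 0 := by
        rw [integral_add hic.ofReal (his.ofReal.mul_const _), integral_mul_const,
          integral_complex_ofReal, integral_complex_ofReal, hc, hsn]
        simp

theorem continuous_transport {U : V3 → ℝ} (hU : ContDiff ℝ 2 U) {ξ : V3 × V3 → ℝ}
    (hξ : ContDiff ℝ 1 ξ) : Continuous (transport U ξ) := by
  unfold transport
  refine (hξ.continuous_fderiv one_ne_zero).clm_apply (continuous_snd.prodMk ?_)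
  exact (continuous_pi fun i => (contDiff_gradV hU i).continuous).neg

theorem transport_eq_zero_of_notMem_tsupport (U : V3 → ℝ) {ξ : V3 × V3 → ℝ} {z : V3 × V3}
    (hz : z ∉ tsupport ξ) : transport U ξ z = 0 := by
  have h : fderiv ℝ ξ z = 0 := by
    by_contra h
    exact hz (support_fderiv_subset ℝ h)
  simp [transport, h]

end Conservation

/-! ### The kernel of the transport operator -/

/-- Functions of the energy and the angular momentum lie in the kernel of the
    transport operator: if f ∈ H and f(x,v) = g(E(x,v), L(x,v)) a.e. on S₀ for
    some g : ℝ² → ℝ, then f ∈ D(T) and T f = 0 weakly. -/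
theorem energy_angular_momentum_in_kernel
    (φ φd : ℝ → ℝ) (U0 : V3 → ℝ) (E0 : ℝ)
    (hS : NewtonianSteadyState φ φd U0 E0)
    (f : V3 × V3 → ℝ) (hf : memH φd U0 E0 f)
    (g : ℝ → ℝ → ℝ)
    (hg : ∀ᵐ z ∂(volume.restrict (S0 U0 E0)), f z = g (energy U0 z) (Lmom z)) :
    memD φd U0 E0 f ∧ weakT φd U0 E0 f (fun _ => 0) := by
  have hweak : weakT φd U0 E0 f (fun _ => 0) := by
    intro ξ ⟨hξ, hs, hsub, _⟩
    have hξ1 : ContDiff ℝ 1 ξ := hξ.of_le (by exact_mod_cast le_top)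
    have hEc : Continuous (energy U0) := (contDiff_energy hS.U0_smooth).continuous
    have hp : Measurable fun z : V3 × V3 => (energy U0 z, Lmom z) :=
      hEc.measurable.prodMk contDiff_Lmom.continuous.measurable
    have hSm : MeasurableSet (S0 U0 E0) := (isOpen_lt hEc continuous_const).measurableSet
    obtain ⟨h, hhm, hh⟩ := exists_measurable_factor hp hf.1.aemeasurable
      (g := fun y => g y.1 y.2) hg
    -- Nothing is known about `φd` at energies `≥ E0`; on `S0` the truncation changes nothing.
    have hφm : Measurable ((Iio E0).indicator φd) := by
      classical
      rw [← piecewise_eq_indicator]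
      exact hS.φd_cont.measurable_piecewise continuousOn_const measurableSet_Iio
    have hwc := continuous_transport hS.U0_smooth hξ1
    have hwi : Integrable (transport U0 ξ) := hwc.integrable_of_hasCompactSupport
      (HasCompactSupport.intro hs fun z hz => transport_eq_zero_of_notMem_tsupport U0 hz)
    have hchar : ∀ L : StrongDual ℝ (ℝ × ℝ), ∫ z in S0 U0 E0, (transport U0 ξ z : ℂ) *
        Complex.exp (L (energy U0 z, Lmom z) * Complex.I) = 0 := by
      intro L
      rw [setIntegral_eq_integral_of_forall_compl_eq_zero]
      · exact integral_transport_mul_exp_eq_zero hS.U0_smooth hS.U0_symm hξ1 hs hwi L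
      · intro z hz
        rw [transport_eq_zero_of_notMem_tsupport U0 fun hz' => hz (hsub hz')]
        simp
    have hzero := integral_comp_mul_eq_zero hwc.measurable hwi.restrict hp hchar
      (H := fun y => h y / |(Iio E0).indicator φd y.1|)
      (hhm.div (hφm.comp measurable_fst).abs)
    simp only [zero_mul, zero_div, integral_zero, neg_zero]
    rw [← hzero]
    refine integral_congr_ae ?_
    filter_upwards [hh, ae_restrict_mem hSm] with z hz hzS
    rw [indicator_of_mem (show energy U0 z ∈ Iio E0 from hzS), hz]
    ring
  refine ⟨⟨hf, fun _ => 0, ⟨aestronglyMeasurable_const, fun A _ => ae_of_all _ fun _ => rfl, ?_⟩,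
    hweak⟩, hweak⟩
  simp

end
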